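/- For every real σ ≥ 2 there exists a constant C > 0 such that for all smooth 2π-periodic functions f and g, ‖D^σ(fg) − f·(D^σ g)‖_{L²(0,2π)} ≤ C·( ‖f‖_{H²}·‖g‖_{H^{σ-1}} + ‖f‖_{H^σ}·‖g‖_{H¹} ). -/

import Mathlib

/-- The `n`-th Fourier coefficient of a `2π`-periodic function:
`ĥ(n) = (1/2π) ∫₀^{2π} h(x) e^{-inx} dx`. -/
noncomputable def fourierCoef (f : ℝ → ℂ) (n : ℤ) : ℂ :=
  (1 / (2 * Real.pi)) * ∫ x in (0:ℝ)..(2 * Real.pi), f x * Complex.exp (-Complex.I * n * x)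

/-- The Fourier multiplier `D^s = (1 - ∂ₓ²)^{s/2}`, multiplying the `n`-th Fourier
coefficient by `(1 + n²)^{s/2}`. -/
noncomputable def Dop (s : ℝ) (f : ℝ → ℂ) : ℝ → ℂ :=
  fun x => ∑' n : ℤ, ((1 + (n : ℝ) ^ 2) ^ (s / 2) : ℝ) * fourierCoef f n *
    Complex.exp (Complex.I * n * x)

/-- The Sobolev norm `‖h‖_{H^s} = (Σ_{n∈ℤ} (1+n²)^s |ĥ(n)|²)^{1/2}`. -/
noncomputable def sobNorm (s : ℝ) (f : ℝ → ℂ) : ℝ :=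
  Real.sqrt (∑' n : ℤ, (1 + (n : ℝ) ^ 2) ^ s * ‖fourierCoef f n‖ ^ 2)

/-- The `L²(0,2π)` norm. -/
noncomputable def L2Norm (f : ℝ → ℂ) : ℝ :=
  Real.sqrt (∫ x in (0:ℝ)..(2 * Real.pi), ‖f x‖ ^ 2)

open MeasureTheory Complex

/-- The `n`-th Fourier coefficient is bounded by the mean of any bound on the function. -/
theorem norm_fourierCoef_le {f : ℝ → ℂ} {M : ℝ} (hM : ∀ x ∈ Set.Icc 0 (2 * Real.pi), ‖f x‖ ≤ M)
    (n : ℤ) : ‖fourierCoef f n‖ ≤ M := by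
  have h : ‖∫ x in (0:ℝ)..(2 * Real.pi), f x * exp (-I * n * x)‖ ≤ M * |2 * Real.pi - 0| := by
    refine intervalIntegral.norm_integral_le_of_norm_le_const fun x hx => ?_
    rw [Set.uIoc_of_le Real.two_pi_pos.le] at hx
    have : ‖exp (-I * n * x)‖ = 1 := by simp [Complex.norm_exp]
    rw [norm_mul, this, mul_one]
    exact hM x (Set.Ioc_subset_Icc_self hx)
  have hpi := Real.two_pi_pos
  rw [fourierCoef, norm_mul]
  have h2 : ‖(1 / (2 * Real.pi) : ℂ)‖ = (2 * Real.pi)⁻¹ := by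
    simp [abs_of_pos Real.pi_pos]
  rw [h2, inv_mul_le_iff₀ hpi]
  rw [sub_zero, abs_of_pos hpi] at h
  linarith

theorem fourierCoef_sub {f g : ℝ → ℂ} (hf : Continuous f) (hg : Continuous g) (n : ℤ) :
    fourierCoef (fun x => f x - g x) n = fourierCoef f n - fourierCoef g n := by
  simp only [fourierCoef, sub_mul]
  rw [intervalIntegral.integral_sub, mul_sub]
  all_goals exact Continuous.intervalIntegrable (by fun_prop) _ _

theorem hasDerivAt_exp_neg_I_mul (n : ℤ) (x : ℝ) :
    HasDerivAt (fun x : ℝ => exp (-I * n * x)) (-I * n * exp (-I * n * x)) x := by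
  have h := ((Complex.ofRealCLM.hasDerivAt (x := x)).const_mul (-I * n)).cexp
  simpa [mul_comm] using h

theorem exp_neg_I_mul_two_pi (n : ℤ) : exp (-I * n * (2 * Real.pi : ℝ)) = 1 := by
  rw [Complex.exp_eq_one_iff]
  exact ⟨-n, by push_cast; ring⟩

theorem fourierCoef_deriv {f : ℝ → ℂ} (hf : ContDiff ℝ 1 f) (hper : ∀ x, f (x + 2 * Real.pi) = f x)
    (n : ℤ) : fourierCoef (deriv f) n = I * n * fourierCoef f n := by
  have hc : Continuous (deriv f) := hf.continuous_deriv le_rfl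
  have h := intervalIntegral.integral_deriv_mul_eq_sub (a := 0) (b := 2 * Real.pi)
    (u := f) (u' := deriv f) (v := fun x : ℝ => exp (-I * n * x))
    (v' := fun x : ℝ => -I * n * exp (-I * n * x))
    (fun x _ => (hf.differentiable (by simp) x).hasDerivAt)
    (fun x _ => hasDerivAt_exp_neg_I_mul n x)
    (hc.intervalIntegrable _ _) (Continuous.intervalIntegrable (by fun_prop) _ _)
  have h0 : f (2 * Real.pi) = f 0 := by simpa using hper 0
  have hfc := hf.continuous
  rw [intervalIntegral.integral_add (Continuous.intervalIntegrable (by fun_prop) _ _)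
    (Continuous.intervalIntegrable (by fun_prop) _ _), exp_neg_I_mul_two_pi, h0] at h
  have h3 : ∫ x in (0:ℝ)..(2 * Real.pi), f x * (-I * n * exp (-I * n * x))
      = -I * n * ∫ x in (0:ℝ)..(2 * Real.pi), f x * exp (-I * n * x) := by
    rw [← intervalIntegral.integral_const_mul]
    congr 1; ext x; ring
  rw [h3] at h
  simp only [ofReal_zero, mul_zero, Complex.exp_zero, sub_self] at h
  rw [fourierCoef, fourierCoef]
  linear_combination (1 / (2 * Real.pi) : ℂ) * h

theorem deriv_add_two_pi {f : ℝ → ℂ} (hper : ∀ x, f (x + 2 * Real.pi) = f x) (x : ℝ) :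
    deriv f (x + 2 * Real.pi) = deriv f x := by
  rw [← deriv_comp_add_const, funext hper]

theorem fourierCoef_sub_deriv_deriv {f : ℝ → ℂ} (hf : ContDiff ℝ (⊤ : ℕ∞) f)
    (hper : ∀ x, f (x + 2 * Real.pi) = f x) (n : ℤ) :
    fourierCoef (fun x => f x - deriv (deriv f) x) n = (1 + (n : ℂ) ^ 2) * fourierCoef f n := by
  have hf' : ContDiff ℝ (⊤ : ℕ∞) (deriv f) := (contDiff_infty_iff_deriv.1 hf).2
  have hf'' : ContDiff ℝ (⊤ : ℕ∞) (deriv (deriv f)) := (contDiff_infty_iff_deriv.1 hf').2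
  have hper' := deriv_add_two_pi hper
  rw [fourierCoef_sub hf.continuous hf''.continuous,
    fourierCoef_deriv (hf'.of_le (by exact_mod_cast le_top)) hper',
    fourierCoef_deriv (hf.of_le (by exact_mod_cast le_top)) hper]
  linear_combination -(n : ℂ) ^ 2 * fourierCoef f n * I_sq

/-- Fourier coefficients of a smooth periodic function decay faster than any power. -/
theorem exists_pow_mul_norm_fourierCoef_le (k : ℕ) : ∀ {f : ℝ → ℂ}, ContDiff ℝ (⊤ : ℕ∞) f →
    (∀ x, f (x + 2 * Real.pi) = f x) →
    ∃ M : ℝ, ∀ n : ℤ, (1 + (n : ℝ) ^ 2) ^ k * ‖fourierCoef f n‖ ≤ M := by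
  induction k with
  | zero =>
    intro f hf _
    obtain ⟨M, hM⟩ := isCompact_Icc.exists_bound_of_continuousOn hf.continuous.continuousOn
    exact ⟨M, fun n => by simpa using norm_fourierCoef_le hM n⟩
  | succ k ih =>
    intro f hf hper
    have hf' : ContDiff ℝ (⊤ : ℕ∞) (deriv f) := (contDiff_infty_iff_deriv.1 hf).2
    have hf'' : ContDiff ℝ (⊤ : ℕ∞) (deriv (deriv f)) := (contDiff_infty_iff_deriv.1 hf').2
    have hper' := deriv_add_two_pi hper
    have hper'' := deriv_add_two_pi hper'
    obtain ⟨M, hM⟩ := ih (hf.sub hf'') (fun x => by simp only [hper, hper''])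
    refine ⟨M, fun n => le_trans (le_of_eq ?_) (hM n)⟩
    have h : fourierCoef (fun x => f x - deriv (deriv f) x) n = (1 + (n : ℂ) ^ 2) * fourierCoef f n :=
      fourierCoef_sub_deriv_deriv hf hper n
    have hn : ‖(1 + (n : ℂ) ^ 2)‖ = 1 + (n : ℝ) ^ 2 := by
      rw [show (1 + (n : ℂ) ^ 2) = ((1 + (n : ℝ) ^ 2 : ℝ) : ℂ) by push_cast; rfl,
        Complex.norm_of_nonneg (by positivity)]
    rw [h, norm_mul, hn]
    ring

theorem summable_inv_one_add_sq : Summable fun n : ℤ => (1 + (n : ℝ) ^ 2)⁻¹ := by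
  refine Summable.of_norm_bounded_eventually
    (g := fun n : ℤ => 1 / (n : ℝ) ^ 2) (Real.summable_one_div_int_pow.2 one_lt_two) ?_
  filter_upwards [Set.finite_singleton (0 : ℤ) |>.compl_mem_cofinite] with n hn
  have hn : (n : ℝ) ≠ 0 := by simpa using hn
  rw [Real.norm_of_nonneg (by positivity), one_div]
  gcongr
  linarith

theorem summable_rpow_mul_norm_fourierCoef {f : ℝ → ℂ} (hf : ContDiff ℝ (⊤ : ℕ∞) f)
    (hper : ∀ x, f (x + 2 * Real.pi) = f x) (s : ℝ) :
    Summable fun n : ℤ => (1 + (n : ℝ) ^ 2) ^ s * ‖fourierCoef f n‖ := by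
  obtain ⟨k, hk⟩ := exists_nat_ge (s + 1)
  obtain ⟨M, hM⟩ := exists_pow_mul_norm_fourierCoef_le k hf hper
  refine Summable.of_nonneg_of_le (fun n => by positivity) (fun n => ?_)
    (summable_inv_one_add_sq.mul_left M)
  have h1 : (0 : ℝ) < 1 + (n : ℝ) ^ 2 := by positivity
  rw [← div_eq_mul_inv, le_div_iff₀ h1]
  refine le_trans ?_ (hM n)
  rw [mul_right_comm, ← Real.rpow_add_one h1.ne', ← Real.rpow_natCast _ k]
  have h2 := Real.rpow_le_rpow_of_exponent_le (show 1 ≤ 1 + (n : ℝ) ^ 2 by nlinarith) hk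
  gcongr

theorem summable_rpow_mul_norm_fourierCoef_sq {f : ℝ → ℂ} (hf : ContDiff ℝ (⊤ : ℕ∞) f)
    (hper : ∀ x, f (x + 2 * Real.pi) = f x) (s : ℝ) :
    Summable fun n : ℤ => (1 + (n : ℝ) ^ 2) ^ s * ‖fourierCoef f n‖ ^ 2 := by
  obtain ⟨M, hM⟩ := exists_pow_mul_norm_fourierCoef_le 0 hf hper
  refine Summable.of_nonneg_of_le (fun n => by positivity) (fun n => ?_)
    ((summable_rpow_mul_norm_fourierCoef hf hper s).mul_right M)
  rw [pow_two ‖_‖, ← mul_assoc]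
  gcongr
  simpa using hM n

/-- Fourier coefficients of the product with an absolutely convergent trigonometric series. -/
theorem fourierCoef_mul_tsum {f : ℝ → ℂ} (hf : Continuous f) {b : ℤ → ℂ}
    (hb : Summable fun k => ‖b k‖) (n : ℤ) :
    fourierCoef (fun x => f x * ∑' k, b k * exp (I * k * x)) n
      = ∑' k, fourierCoef f (n - k) * b k := by
  let F : ℤ → C(ℝ, ℂ) := fun k =>
    ⟨fun x => f x * (b k * exp (I * k * x)) * exp (-I * n * x), by fun_prop⟩
  have hexp : ∀ (k : ℤ) (x : ℝ), ‖exp (I * k * x)‖ = 1 := fun k x => by simp [Complex.norm_exp]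
  have hexp' : ∀ (k : ℤ) (x : ℝ), ‖exp (-I * k * x)‖ = 1 := fun k x => by simp [Complex.norm_exp]
  obtain ⟨M, hM⟩ := (isCompact_uIcc (a := (0:ℝ)) (b := 2 * Real.pi)).exists_bound_of_continuousOn
    hf.continuousOn
  have hM0 : 0 ≤ M := (norm_nonneg _).trans (hM 0 Set.left_mem_uIcc)
  have hsum : Summable fun k => ‖(F k).restrict
      (⟨Set.uIcc 0 (2 * Real.pi), isCompact_uIcc⟩ : TopologicalSpace.Compacts ℝ)‖ := by
    refine Summable.of_nonneg_of_le (fun _ => norm_nonneg _) (fun k => ?_) (hb.mul_left M)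
    refine (ContinuousMap.norm_le _ (by positivity)).2 fun x => ?_
    simp only [ContinuousMap.restrict_apply, F, ContinuousMap.coe_mk, norm_mul, hexp, hexp',
      mul_one]
    gcongr
    exact hM _ x.2
  have h := (intervalIntegral.hasSum_intervalIntegral_of_summable_norm hsum).tsum_eq
  have hl : ∀ k, (1 / (2 * Real.pi) : ℂ) * ∫ x in (0:ℝ)..(2 * Real.pi), F k x
      = fourierCoef f (n - k) * b k := fun k => by
    rw [fourierCoef, mul_assoc, ← intervalIntegral.integral_mul_const]
    congr 2
    ext x
    simp only [F, ContinuousMap.coe_mk]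
    rw [show -I * ((n - k : ℤ) : ℂ) * x = I * k * x + -I * n * x by push_cast; ring,
      Complex.exp_add]
    ring
  rw [← tsum_congr hl, tsum_mul_left, h, fourierCoef]
  congr 2
  ext x
  simp only [F, ContinuousMap.coe_mk]
  rw [tsum_mul_right, tsum_mul_left]

theorem continuous_tsum_exp {b : ℤ → ℂ} (hb : Summable fun k => ‖b k‖) :
    Continuous fun x : ℝ => ∑' k, b k * exp (I * k * x) := by
  refine continuous_tsum (fun k => by fun_prop) hb fun k x => ?_
  rw [norm_mul]
  simp [Complex.norm_exp]

theorem fourierCoef_one (n : ℤ) : fourierCoef (fun _ => 1) n = if n = 0 then 1 else 0 := by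
  have hpi : (Real.pi : ℂ) ≠ 0 := by exact_mod_cast Real.pi_ne_zero
  split_ifs with h
  · subst h
    simp [fourierCoef]
    field_simp
  · have := fourierCoef_deriv (f := fun _ => 1) contDiff_const (fun _ => rfl) n
    simp only [deriv_const'] at this
    have h0 : fourierCoef (fun _ => 0) n = 0 := by simp [fourierCoef]
    rw [h0] at this
    simpa [h] using this.symm

theorem fourierCoef_tsum {b : ℤ → ℂ} (hb : Summable fun k => ‖b k‖) (n : ℤ) :
    fourierCoef (fun x => ∑' k, b k * exp (I * k * x)) n = b n := by
  have h := fourierCoef_mul_tsum (f := fun _ => 1) continuous_const hb n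
  simp only [one_mul] at h
  rw [h, tsum_eq_single n]
  · simp [fourierCoef_one]
  · intro k hk
    simp [fourierCoef_one, sub_eq_zero, hk.symm]

theorem fourierCoeffOn_eq_fourierCoef (f : ℝ → ℂ) (n : ℤ) :
    fourierCoeffOn Real.two_pi_pos f n = fourierCoef f n := by
  have hpi : (Real.pi : ℂ) ≠ 0 := by exact_mod_cast Real.pi_ne_zero
  rw [fourierCoeffOn_eq_integral, fourierCoef, Complex.real_smul]
  push_cast
  rw [sub_zero]
  congr 2
  ext x
  rw [fourier_coe_apply, smul_eq_mul, mul_comm]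
  congr 2
  push_cast
  field_simp
  ring

/-- Parseval's identity for continuous functions. -/
theorem hasSum_norm_fourierCoef_sq {f : ℝ → ℂ} (hf : Continuous f) :
    HasSum (fun n => ‖fourierCoef f n‖ ^ 2)
      ((2 * Real.pi)⁻¹ * ∫ x in (0:ℝ)..(2 * Real.pi), ‖f x‖ ^ 2) := by
  have hL2 : MemLp f 2 (volume.restrict (Set.Ioc 0 (2 * Real.pi))) := by
    obtain ⟨M, hM⟩ := (isCompact_Icc (a := (0:ℝ)) (b := 2 * Real.pi)).exists_bound_of_continuousOn
      hf.continuousOn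
    refine MemLp.of_bound hf.aestronglyMeasurable M ?_
    filter_upwards [ae_restrict_mem measurableSet_Ioc] with x hx
    exact hM x (Set.Ioc_subset_Icc_self hx)
  simpa [fourierCoeffOn_eq_fourierCoef] using hasSum_sq_fourierCoeffOn Real.two_pi_pos hL2

/-- A smooth periodic function is the sum of its Fourier series. -/
theorem eq_tsum_fourierCoef {f : ℝ → ℂ} (hf : ContDiff ℝ (⊤ : ℕ∞) f)
    (hper : ∀ x, f (x + 2 * Real.pi) = f x) (x : ℝ) :
    f x = ∑' n : ℤ, fourierCoef f n * exp (I * n * x) := by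
  have hs : Summable fun n => ‖fourierCoef f n‖ := by
    simpa using summable_rpow_mul_norm_fourierCoef hf hper 0
  set g : ℝ → ℂ := fun x => ∑' n : ℤ, fourierCoef f n * exp (I * n * x) with hg
  have hgc : Continuous g := continuous_tsum_exp hs
  have hgper : Function.Periodic g (2 * Real.pi) := fun x => by
    refine tsum_congr fun n => ?_
    congr 1
    rw [Complex.exp_eq_exp_iff_exists_int]
    exact ⟨n, by push_cast; ring⟩
  have hd : Function.Periodic (fun x => f x - g x) (2 * Real.pi) := fun x => by
    simp only [hper x, hgper x]
  have hdc : Continuous fun x => f x - g x := hf.continuous.sub hgc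
  have hP := hasSum_norm_fourierCoef_sq hdc
  have h0 : ∀ n, fourierCoef (fun x => f x - g x) n = 0 := fun n => by
    rw [fourierCoef_sub hf.continuous hgc, hg, fourierCoef_tsum hs, sub_self]
  simp only [h0, norm_zero] at hP
  have hI : ∫ x in (0:ℝ)..(2 * Real.pi), ‖f x - g x‖ ^ 2 = 0 := by
    have := hP.unique (a₂ := 0) (by simp)
    simpa [Real.pi_ne_zero] using this
  obtain ⟨y, hy, hxy⟩ := hd.exists_mem_Ico₀ Real.two_pi_pos x
  suffices f y - g y = 0 from sub_eq_zero.1 (hxy.trans this)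
  by_contra hne
  have : 0 < ∫ x in (0:ℝ)..(2 * Real.pi), ‖f x - g x‖ ^ 2 :=
    intervalIntegral.integral_pos Real.two_pi_pos (hdc.norm.pow 2).continuousOn (fun _ _ => by positivity)
      ⟨y, Set.Ico_subset_Icc_self hy, by positivity⟩
  exact this.ne' hI

theorem ENNReal.two_mul_mul_le_sq_add_sq (x y : ENNReal) : 2 * (x * y) ≤ x ^ 2 + y ^ 2 := by
  wlog h : x ≤ y generalizing x y
  · rw [mul_comm x, add_comm]
    exact this y x (le_of_not_ge h)
  obtain ⟨c, rfl⟩ := exists_add_of_le h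
  calc 2 * (x * (x + c)) ≤ 2 * (x * (x + c)) + c ^ 2 := le_self_add
    _ = x ^ 2 + (x + c) ^ 2 := by ring

theorem ENNReal.tsum_sq_eq {ι : Type*} (x : ι → ENNReal) :
    (∑' i, x i) ^ 2 = ∑' i, ∑' j, x i * x j := by
  rw [pow_two, ← ENNReal.tsum_mul_right]
  exact tsum_congr fun i => ENNReal.tsum_mul_left.symm

/-- Cauchy–Schwarz for sums in `ℝ≥0∞`. -/
theorem ENNReal.tsum_mul_sq_le {ι : Type*} (x y : ι → ENNReal) :
    (∑' i, x i * y i) ^ 2 ≤ (∑' i, x i ^ 2) * ∑' i, y i ^ 2 := by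
  have h2 : (2 : ENNReal) ≠ 0 := two_ne_zero
  rw [← ENNReal.mul_le_mul_iff_right h2 ENNReal.ofNat_ne_top, ENNReal.tsum_sq_eq]
  have hxy : (∑' i, x i ^ 2) * ∑' i, y i ^ 2 = ∑' i, ∑' j, x i ^ 2 * y j ^ 2 := by
    rw [← ENNReal.tsum_mul_right]
    exact tsum_congr fun i => ENNReal.tsum_mul_left.symm
  have hyx : (∑' i, x i ^ 2) * ∑' i, y i ^ 2 = ∑' i, ∑' j, x j ^ 2 * y i ^ 2 := by
    rw [hxy, ENNReal.tsum_comm]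
  rw [two_mul (_ * _)]
  nth_rewrite 1 [hxy]
  rw [hyx, ← ENNReal.tsum_add, ← ENNReal.tsum_mul_left]
  refine ENNReal.tsum_le_tsum fun i => ?_
  rw [← ENNReal.tsum_add, ← ENNReal.tsum_mul_left]
  refine ENNReal.tsum_le_tsum fun j => ?_
  have := ENNReal.two_mul_mul_le_sq_add_sq (x i * y j) (x j * y i)
  calc 2 * (x i * y i * (x j * y j)) = 2 * (x i * y j * (x j * y i)) := by ring
    _ ≤ _ := this
    _ = _ := by ring

/-- Young's convolution inequality `ℓ² * ℓ¹ ⊆ ℓ²`. -/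
theorem ENNReal.tsum_conv_sq_le {G : Type*} [AddGroup G] (x y : G → ENNReal) :
    ∑' n, (∑' k, x (n - k) * y k) ^ 2 ≤ (∑' n, x n ^ 2) * (∑' k, y k) ^ 2 := by
  have key : ∀ k l, ∑' n, x (n - k) * x (n - l) ≤ ∑' n, x n ^ 2 := fun k l => by
    have hs : ∀ k, ∑' n, x (n - k) ^ 2 = ∑' n, x n ^ 2 := fun k =>
      (Equiv.subRight k).tsum_eq fun n => x n ^ 2
    have h2 : (2 : ENNReal) ≠ 0 := two_ne_zero
    rw [← ENNReal.mul_le_mul_iff_right h2 ENNReal.ofNat_ne_top, two_mul (∑' n, x n ^ 2)]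
    nth_rewrite 1 [← hs k]
    rw [← hs l, ← ENNReal.tsum_add, ← ENNReal.tsum_mul_left]
    exact ENNReal.tsum_le_tsum fun n => ENNReal.two_mul_mul_le_sq_add_sq _ _
  calc ∑' n, (∑' k, x (n - k) * y k) ^ 2
      = ∑' n, ∑' k, ∑' l, (y k * y l) * (x (n - k) * x (n - l)) := by
        refine tsum_congr fun n => ?_
        rw [ENNReal.tsum_sq_eq]
        exact tsum_congr fun k => tsum_congr fun l => by ring
    _ = ∑' k, ∑' l, (y k * y l) * ∑' n, x (n - k) * x (n - l) := by
        rw [ENNReal.tsum_comm]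
        refine tsum_congr fun k => ?_
        rw [ENNReal.tsum_comm]
        exact tsum_congr fun l => ENNReal.tsum_mul_left
    _ ≤ ∑' k, ∑' l, (y k * y l) * ∑' n, x n ^ 2 := by
        refine ENNReal.tsum_le_tsum fun k => ENNReal.tsum_le_tsum fun l => ?_
        exact mul_le_mul_right (key k l) _
    _ = (∑' n, x n ^ 2) * (∑' k, y k) ^ 2 := by
        rw [ENNReal.tsum_sq_eq, mul_comm, ← ENNReal.tsum_mul_right]
        exact tsum_congr fun k => ENNReal.tsum_mul_right

theorem hasDerivAt_one_add_sq_rpow (σ t : ℝ) :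
    HasDerivAt (fun t : ℝ => (1 + t ^ 2) ^ (σ / 2)) (σ * t * (1 + t ^ 2) ^ (σ / 2 - 1)) t := by
  have h : HasDerivAt (fun t : ℝ => 1 + t ^ 2) (2 * t) t := by
    simpa using (hasDerivAt_pow 2 t).const_add 1
  convert h.rpow_const (p := σ / 2) (Or.inl (by positivity)) using 1
  ring

/-- The symbol `(1 + x²)^{σ/2}` has increments controlled by lower-order weights. -/
theorem abs_one_add_sq_rpow_sub_le {σ : ℝ} (hσ : 1 ≤ σ) (x y : ℝ) :
    |(1 + x ^ 2) ^ (σ / 2) - (1 + y ^ 2) ^ (σ / 2)| ≤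
      σ * 4 ^ ((σ - 1) / 2) * ((1 + (x - y) ^ 2) ^ (σ / 2) +
        (1 + (x - y) ^ 2) ^ (1 / 2 : ℝ) * (1 + y ^ 2) ^ ((σ - 1) / 2)) := by
  set p := (σ - 1) / 2 with hp
  have hp0 : 0 ≤ p := by rw [hp]; linarith
  set A := 1 + (x - y) ^ 2 with hA
  set B := 1 + y ^ 2 with hB
  have hA0 : 0 < A := by positivity
  have hB0 : 0 < B := by positivity
  have hsqrt : ∀ t : ℝ, |t| ≤ (1 + t ^ 2) ^ (1 / 2 : ℝ) := fun t => by
    rw [← Real.sqrt_eq_rpow]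
    exact Real.abs_le_sqrt (by linarith)
  have hmax : (2 * (A + B)) ^ p ≤ 4 ^ p * (A ^ p + B ^ p) := by
    have h4 : 2 * (A + B) ≤ 4 * max A B := by
      linarith [le_max_left A B, le_max_right A B]
    refine (Real.rpow_le_rpow (by positivity) h4 hp0).trans ?_
    rw [Real.mul_rpow (by norm_num) (by positivity)]
    gcongr
    have hAp : 0 ≤ A ^ p := by positivity
    have hBp : 0 ≤ B ^ p := by positivity
    rcases max_cases A B with h | h <;> rw [h.1] <;> linarith
  have hder : ∀ t ∈ Set.uIcc y x,
      ‖σ * t * (1 + t ^ 2) ^ (σ / 2 - 1)‖ ≤ σ * (4 ^ p * (A ^ p + B ^ p)) := fun t ht => by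
    have ht0 : 0 < 1 + t ^ 2 := by positivity
    have htyx : |t - y| ≤ |x - y| := Set.abs_sub_left_of_mem_uIcc ht
    have htsq : (t - y) ^ 2 ≤ (x - y) ^ 2 := sq_le_sq.2 htyx
    have hle : 1 + t ^ 2 ≤ 2 * (A + B) := by
      rw [hA, hB]; nlinarith [sq_nonneg (t - 2 * y)]
    rw [Real.norm_eq_abs, abs_mul, abs_mul, abs_of_nonneg (by linarith : 0 ≤ σ),
      abs_of_nonneg (by positivity : 0 ≤ (1 + t ^ 2) ^ (σ / 2 - 1)), mul_assoc]
    refine mul_le_mul_of_nonneg_left ?_ (by linarith)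
    calc |t| * (1 + t ^ 2) ^ (σ / 2 - 1)
        ≤ (1 + t ^ 2) ^ (1 / 2 : ℝ) * (1 + t ^ 2) ^ (σ / 2 - 1) := by gcongr; exact hsqrt t
      _ = (1 + t ^ 2) ^ p := by rw [← Real.rpow_add ht0]; congr 1; rw [hp]; ring
      _ ≤ (2 * (A + B)) ^ p := Real.rpow_le_rpow ht0.le hle hp0
      _ ≤ _ := hmax
  have hmv := (convex_uIcc y x).norm_image_sub_le_of_norm_hasDerivWithin_le
    (f := fun t : ℝ => (1 + t ^ 2) ^ (σ / 2))
    (fun t _ => (hasDerivAt_one_add_sq_rpow σ t).hasDerivWithinAt) hder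
    Set.left_mem_uIcc Set.right_mem_uIcc
  rw [Real.norm_eq_abs, Real.norm_eq_abs] at hmv
  refine hmv.trans ?_
  have hsplit : A ^ (σ / 2) = A ^ p * A ^ (1 / 2 : ℝ) := by
    rw [← Real.rpow_add hA0]; congr 1; rw [hp]; ring
  calc σ * (4 ^ p * (A ^ p + B ^ p)) * |x - y|
      ≤ σ * (4 ^ p * (A ^ p + B ^ p)) * A ^ (1 / 2 : ℝ) := by gcongr; exact hsqrt _
    _ = _ := by rw [hsplit]; ring

/-- The `n`-th term `(1+n²)^{s/2} |f̂(n)|` of the `ℓ²` sequence defining `sobNorm s f`. -/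
noncomputable def sobTerm (s : ℝ) (f : ℝ → ℂ) (n : ℤ) : ENNReal :=
  ENNReal.ofReal ((1 + (n : ℝ) ^ 2) ^ (s / 2) * ‖fourierCoef f n‖)

theorem sobNorm_nonneg (s : ℝ) (f : ℝ → ℂ) : 0 ≤ sobNorm s f := Real.sqrt_nonneg _

theorem tsum_sobTerm_sq {f : ℝ → ℂ} (hf : ContDiff ℝ (⊤ : ℕ∞) f)
    (hper : ∀ x, f (x + 2 * Real.pi) = f x) (s : ℝ) :
    ∑' n, sobTerm s f n ^ 2 = ENNReal.ofReal (sobNorm s f ^ 2) := by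
  rw [sobNorm, Real.sq_sqrt (tsum_nonneg fun n => by positivity),
    ENNReal.ofReal_tsum_of_nonneg (fun n => by positivity)
      (summable_rpow_mul_norm_fourierCoef_sq hf hper s)]
  refine tsum_congr fun n => ?_
  rw [sobTerm, ← ENNReal.ofReal_pow (by positivity), mul_pow, ← Real.rpow_mul_natCast (by positivity)]
  congr 3
  push_cast
  ring

/-- Sobolev embedding of `H^{s+1}` into the functions with `ℓ¹` weighted Fourier coefficients. -/
theorem tsum_sobTerm_sq_le {f : ℝ → ℂ} (hf : ContDiff ℝ (⊤ : ℕ∞) f)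
    (hper : ∀ x, f (x + 2 * Real.pi) = f x) (s : ℝ) :
    (∑' n, sobTerm s f n) ^ 2 ≤
      ENNReal.ofReal ((∑' n : ℤ, (1 + (n : ℝ) ^ 2)⁻¹) * sobNorm (s + 1) f ^ 2) := by
  have hn : ∀ n : ℤ, sobTerm s f n =
      ENNReal.ofReal ((1 + (n : ℝ) ^ 2) ^ (-1 / 2 : ℝ)) * sobTerm (s + 1) f n := fun n => by
    rw [sobTerm, sobTerm, ← ENNReal.ofReal_mul (by positivity), ← mul_assoc,
      ← Real.rpow_add (by positivity)]
    congr 3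
    ring
  rw [tsum_congr hn]
  refine (ENNReal.tsum_mul_sq_le _ _).trans (le_of_eq ?_)
  rw [tsum_sobTerm_sq hf hper, ENNReal.ofReal_mul (tsum_nonneg fun n => by positivity),
    ENNReal.ofReal_tsum_of_nonneg (fun n => by positivity) summable_inv_one_add_sq]
  congr 1
  refine tsum_congr fun n => ?_
  rw [← ENNReal.ofReal_pow (by positivity), ← Real.rpow_mul_natCast (by positivity),
    ← Real.rpow_neg_one]
  norm_num

theorem summable_norm_Dop_coef {f : ℝ → ℂ} (hf : ContDiff ℝ (⊤ : ℕ∞) f)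
    (hper : ∀ x, f (x + 2 * Real.pi) = f x) (s : ℝ) :
    Summable fun n : ℤ => ‖(((1 + (n : ℝ) ^ 2) ^ (s / 2) : ℝ) : ℂ) * fourierCoef f n‖ := by
  convert summable_rpow_mul_norm_fourierCoef hf hper (s / 2) using 2 with n
  rw [norm_mul, Complex.norm_of_nonneg (by positivity)]

theorem continuous_Dop {f : ℝ → ℂ} (hf : ContDiff ℝ (⊤ : ℕ∞) f)
    (hper : ∀ x, f (x + 2 * Real.pi) = f x) (s : ℝ) : Continuous (Dop s f) :=
  continuous_tsum_exp (summable_norm_Dop_coef hf hper s)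

/-- The Fourier coefficients of the commutator `[D^σ, f] g`. -/
theorem fourierCoef_commutator {f g : ℝ → ℂ} (hf : ContDiff ℝ (⊤ : ℕ∞) f)
    (hg : ContDiff ℝ (⊤ : ℕ∞) g) (hfper : ∀ x, f (x + 2 * Real.pi) = f x)
    (hgper : ∀ x, g (x + 2 * Real.pi) = g x) (σ : ℝ) (n : ℤ) :
    fourierCoef (fun x => Dop σ (fun y => f y * g y) x - f x * Dop σ g x) n =
      ∑' k : ℤ, (((1 + (n : ℝ) ^ 2) ^ (σ / 2) - (1 + (k : ℝ) ^ 2) ^ (σ / 2) : ℝ) : ℂ) *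
        (fourierCoef f (n - k) * fourierCoef g k) := by
  have hfg : ContDiff ℝ (⊤ : ℕ∞) fun y => f y * g y := hf.mul hg
  have hfgper : ∀ x, f (x + 2 * Real.pi) * g (x + 2 * Real.pi) = f x * g x := fun x => by
    rw [hfper, hgper]
  have hgs : Summable fun k => ‖fourierCoef g k‖ := by
    simpa using summable_rpow_mul_norm_fourierCoef hg hgper 0
  obtain ⟨M, hM⟩ := exists_pow_mul_norm_fourierCoef_le 0 hf hfper
  have hM' : ∀ n, ‖fourierCoef f n‖ ≤ M := fun n => by simpa using hM n
  have hconv : ∀ {b : ℤ → ℂ}, (Summable fun k => ‖b k‖) →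
      Summable fun k => fourierCoef f (n - k) * b k := fun {b} hb => by
    refine Summable.of_norm_bounded (hb.mul_left M) fun k => ?_
    rw [norm_mul]
    gcongr
    exact hM' _
  have hprod : fourierCoef (fun y => f y * g y) n =
      ∑' k, fourierCoef f (n - k) * fourierCoef g k := by
    rw [← fourierCoef_mul_tsum hf.continuous hgs]
    congr 1
    ext x
    rw [← eq_tsum_fourierCoef hg hgper]
  have hc : Continuous fun x => f x * Dop σ g x :=
    hf.continuous.mul (continuous_Dop hg hgper σ)
  have h1 : fourierCoef (Dop σ fun y => f y * g y) n = _ :=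
    fourierCoef_tsum (summable_norm_Dop_coef hfg hfgper σ) n
  have h2 : fourierCoef (fun x => f x * Dop σ g x) n = _ :=
    fourierCoef_mul_tsum hf.continuous (summable_norm_Dop_coef hg hgper σ) n
  rw [fourierCoef_sub (continuous_Dop hfg hfgper σ)
    hc, h1, h2, hprod, ← tsum_mul_left,
    ← Summable.tsum_sub ((hconv hgs).mul_left _) (hconv (summable_norm_Dop_coef hg hgper σ))]
  refine tsum_congr fun k => ?_
  push_cast
  ring

theorem enorm_fourierCoef_commutator_le {f g : ℝ → ℂ} (hf : ContDiff ℝ (⊤ : ℕ∞) f)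
    (hg : ContDiff ℝ (⊤ : ℕ∞) g) (hfper : ∀ x, f (x + 2 * Real.pi) = f x)
    (hgper : ∀ x, g (x + 2 * Real.pi) = g x) {σ : ℝ} (hσ : 1 ≤ σ) (n : ℤ) :
    ‖fourierCoef (fun x => Dop σ (fun y => f y * g y) x - f x * Dop σ g x) n‖ₑ ≤
      ENNReal.ofReal (σ * 4 ^ ((σ - 1) / 2)) *
        (∑' k, sobTerm σ f (n - k) * sobTerm 0 g k +
          ∑' k, sobTerm 1 f (n - k) * sobTerm (σ - 1) g k) := by
  rw [fourierCoef_commutator hf hg hfper hgper]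
  refine enorm_tsum_le_tsum_enorm.trans ?_
  rw [← ENNReal.tsum_add, ← ENNReal.tsum_mul_left]
  refine ENNReal.tsum_le_tsum fun k => ?_
  have h := abs_one_add_sq_rpow_sub_le hσ (n : ℝ) (k : ℝ)
  simp only [sobTerm]
  rw [← ENNReal.ofReal_mul (by positivity), ← ENNReal.ofReal_mul (by positivity),
    ← ENNReal.ofReal_add (by positivity) (by positivity), ← ENNReal.ofReal_mul (by positivity),
    ← ofReal_norm]
  refine ENNReal.ofReal_le_ofReal ?_
  rw [norm_mul, norm_mul, Complex.norm_real, Real.norm_eq_abs]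
  refine (mul_le_mul_of_nonneg_right h (by positivity)).trans (le_of_eq ?_)
  push_cast
  simp only [zero_div, Real.rpow_zero]
  ring

/-- The commutator estimate on the level of Fourier coefficients. -/
theorem tsum_norm_fourierCoef_commutator_sq_le {f g : ℝ → ℂ} (hf : ContDiff ℝ (⊤ : ℕ∞) f)
    (hg : ContDiff ℝ (⊤ : ℕ∞) g) (hfper : ∀ x, f (x + 2 * Real.pi) = f x)
    (hgper : ∀ x, g (x + 2 * Real.pi) = g x) {σ : ℝ} (hσ : 1 ≤ σ) :
    ∑' n, ‖fourierCoef (fun x => Dop σ (fun y => f y * g y) x - f x * Dop σ g x) n‖ₑ ^ 2 ≤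
      ENNReal.ofReal ((σ * 4 ^ ((σ - 1) / 2)) ^ 2 * (2 * (∑' n : ℤ, (1 + (n : ℝ) ^ 2)⁻¹)) *
        (sobNorm 2 f * sobNorm (σ - 1) g + sobNorm σ f * sobNorm 1 g) ^ 2) := by
  set K := σ * 4 ^ ((σ - 1) / 2) with hK
  set S := ∑' n : ℤ, (1 + (n : ℝ) ^ 2)⁻¹ with hS
  have hK0 : 0 ≤ K := by positivity
  have hS0 : 0 ≤ S := tsum_nonneg fun n => by positivity
  have hsq : ∀ x y : ENNReal, (x + y) ^ 2 ≤ 2 * (x ^ 2 + y ^ 2) := fun x y => by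
    calc (x + y) ^ 2 = x ^ 2 + y ^ 2 + 2 * (x * y) := by ring
      _ ≤ x ^ 2 + y ^ 2 + (x ^ 2 + y ^ 2) := by
        gcongr; exact ENNReal.two_mul_mul_le_sq_add_sq x y
      _ = _ := by ring
  have h1 : ∑' n, (∑' k, sobTerm σ f (n - k) * sobTerm 0 g k) ^ 2 ≤
      ENNReal.ofReal (sobNorm σ f ^ 2 * (S * sobNorm 1 g ^ 2)) := by
    refine (ENNReal.tsum_conv_sq_le _ _).trans ?_
    rw [tsum_sobTerm_sq hf hfper, ENNReal.ofReal_mul (by positivity)]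
    gcongr
    simpa using tsum_sobTerm_sq_le hg hgper 0
  have h2 : ∑' n, (∑' k, sobTerm 1 f (n - k) * sobTerm (σ - 1) g k) ^ 2 ≤
      ENNReal.ofReal (sobNorm (σ - 1) g ^ 2 * (S * sobNorm 2 f ^ 2)) := by
    have hcomm : ∀ n, ∑' k, sobTerm 1 f (n - k) * sobTerm (σ - 1) g k =
        ∑' k, sobTerm (σ - 1) g (n - k) * sobTerm 1 f k := fun n => by
      rw [← (Equiv.subLeft n).tsum_eq]
      exact tsum_congr fun k => by simp [mul_comm]
    rw [tsum_congr fun n => by rw [hcomm n]]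
    refine (ENNReal.tsum_conv_sq_le _ _).trans ?_
    rw [tsum_sobTerm_sq hg hgper, ENNReal.ofReal_mul (by positivity)]
    gcongr
    have := tsum_sobTerm_sq_le hf hfper 1
    rwa [one_add_one_eq_two] at this
  have hf0 := sobNorm_nonneg σ f
  have hf2 := sobNorm_nonneg 2 f
  have hg0 := sobNorm_nonneg (σ - 1) g
  have hg1 := sobNorm_nonneg 1 g
  calc _ ≤ ∑' n, ENNReal.ofReal K ^ 2 * (2 * ((∑' k, sobTerm σ f (n - k) * sobTerm 0 g k) ^ 2 +
        (∑' k, sobTerm 1 f (n - k) * sobTerm (σ - 1) g k) ^ 2)) := by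
        refine ENNReal.tsum_le_tsum fun n => ?_
        grw [enorm_fourierCoef_commutator_le hf hg hfper hgper hσ n, mul_pow, hsq]
    _ ≤ ENNReal.ofReal K ^ 2 * (ENNReal.ofReal 2 *
        (ENNReal.ofReal (sobNorm σ f ^ 2 * (S * sobNorm 1 g ^ 2)) +
          ENNReal.ofReal (sobNorm (σ - 1) g ^ 2 * (S * sobNorm 2 f ^ 2)))) := by
        rw [ENNReal.tsum_mul_left, ENNReal.tsum_mul_left, ENNReal.tsum_add, ENNReal.ofReal_ofNat]
        gcongr
    _ ≤ _ := by
        rw [← ENNReal.ofReal_add (by positivity) (by positivity),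
          ← ENNReal.ofReal_mul (by positivity), ← ENNReal.ofReal_pow hK0,
          ← ENNReal.ofReal_mul (by positivity)]
        refine ENNReal.ofReal_le_ofReal ?_
        rw [mul_assoc (K ^ 2), mul_assoc 2 S]
        gcongr
        have : 0 ≤ S * (sobNorm 2 f * sobNorm (σ - 1) g * (sobNorm σ f * sobNorm 1 g)) := by
          positivity
        linarith

/-- periodic Kato–Ponce commutator estimate: for every real `σ ≥ 2` there
is `C > 0` such that for all smooth `2π`-periodic `f`, `g`:
`‖D^σ(fg) − f·D^σ g‖_{L²(0,2π)} ≤ C(‖f‖_{H²}‖g‖_{H^{σ-1}} + ‖f‖_{H^σ}‖g‖_{H¹})`. -/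
theorem stmt_8 (σ : ℝ) (hσ : 2 ≤ σ) :
    ∃ C : ℝ, 0 < C ∧ ∀ f g : ℝ → ℂ,
      ContDiff ℝ (⊤ : ℕ∞) f → ContDiff ℝ (⊤ : ℕ∞) g →
      (∀ x, f (x + 2 * Real.pi) = f x) → (∀ x, g (x + 2 * Real.pi) = g x) →
      L2Norm (fun x => Dop σ (fun y => f y * g y) x - f x * Dop σ g x)
        ≤ C * (sobNorm 2 f * sobNorm (σ - 1) g + sobNorm σ f * sobNorm 1 g) := by
  set K := (σ * 4 ^ ((σ - 1) / 2)) ^ 2 * (2 * (∑' n : ℤ, (1 + (n : ℝ) ^ 2)⁻¹)) with hK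
  have hK0 : 0 ≤ K := mul_nonneg (sq_nonneg _)
    (mul_nonneg zero_le_two (tsum_nonneg fun n => by positivity))
  have hpi := Real.two_pi_pos
  refine ⟨Real.sqrt (2 * Real.pi * K) + 1, by positivity, fun f g hf hg hfper hgper => ?_⟩
  set R := sobNorm 2 f * sobNorm (σ - 1) g + sobNorm σ f * sobNorm 1 g with hR
  have hR0 : 0 ≤ R := add_nonneg (mul_nonneg (sobNorm_nonneg _ _) (sobNorm_nonneg _ _))
    (mul_nonneg (sobNorm_nonneg _ _) (sobNorm_nonneg _ _))
  have hcont : Continuous fun x => Dop σ (fun y => f y * g y) x - f x * Dop σ g x :=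
    (continuous_Dop (hf.mul hg) (fun x => by rw [hfper, hgper]) σ).sub
      (hf.continuous.mul (continuous_Dop hg hgper σ))
  have hP := hasSum_norm_fourierCoef_sq hcont
  have hbound := tsum_norm_fourierCoef_commutator_sq_le hf hg hfper hgper (one_le_two.trans hσ)
  simp_rw [← ofReal_norm, ← ENNReal.ofReal_pow (norm_nonneg _)] at hbound
  rw [← ENNReal.ofReal_tsum_of_nonneg (fun _ => by positivity) hP.summable, hP.tsum_eq,
    ENNReal.ofReal_le_ofReal_iff (by positivity), inv_mul_le_iff₀ hpi] at hbound
  calc L2Norm _ ≤ Real.sqrt (2 * Real.pi * K * R ^ 2) := Real.sqrt_le_sqrt (by linarith)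
    _ = Real.sqrt (2 * Real.pi * K) * R := by
      rw [Real.sqrt_mul (by positivity), Real.sqrt_sq hR0]
    _ ≤ _ := by gcongr; linarith
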